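/- arXiv:2012.02866 — 12 statements merged into one kernel-verified Lean document; each statement's English description precedes it below -/
import Mathlib

section
/- Let (𝔘_n)_{n∈ℕ} be a sequence of free ultrafilters on ℕ and (a_n)_{n∈ℕ} a sequence of positive reals with ∑_{n∈ℕ} a_n = 1. Then the filter ⋂_{n∈ℕ} 𝔘_n = {A ⊆ ℕ : A ∈ 𝔘_n for all n} is generated by the statistical measure μ = ∑_{n∈ℕ} a_n 𝟙_{𝔘_n}, i.e. A ∈ ⋂_{n∈ℕ} 𝔘_n if and only if μ(A) = 1, where 𝟙_{𝔘_n}(A) = 1 if A ∈ 𝔘_n and 0 otherwise. -/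
/-!
For each `n` the indicator `𝟙_{𝔘ₙ}` is a finitely additive `{0, 1}`-valued measure, because an
ultrafilter contains exactly one of two disjoint sets whenever it contains their union; it vanishes
on singletons because `𝔘ₙ` is free. All the series converge by comparison with `∑ aₙ = 1`, so these
properties pass to `μ = ∑ aₙ 𝟙_{𝔘ₙ}`. Since every `aₙ` is positive, `μ A = ∑ aₙ` holds only when no
term is omitted, that is, when `A` lies in every `𝔘ₙ`.
-/

/-- A statistical measure on ℕ: a non-negative finitely additive set function
with `μ ℕ = 1` and `μ {k} = 0` for every `k`. -/
def IsStatMeasure (μ : Set ℕ → ℝ) : Prop :=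
  (∀ A : Set ℕ, 0 ≤ μ A) ∧
  (∀ A B : Set ℕ, Disjoint A B → μ (A ∪ B) = μ A + μ B) ∧
  μ Set.univ = 1 ∧
  (∀ k : ℕ, μ {k} = 0)

open Classical in
/-- The intersection of a sequence of free ultrafilters is generated by the
statistical measure `∑ aₙ 𝟙_{𝔘ₙ}`. -/
theorem stmt_1 (U : ℕ → Ultrafilter ℕ)
    (hfree : ∀ n, (U n : Filter ℕ) ≤ Filter.cofinite)
    (a : ℕ → ℝ) (ha : ∀ n, 0 < a n) (hsum : HasSum a 1) :
    IsStatMeasure (fun A => ∑' n, a n * (if A ∈ U n then (1 : ℝ) else 0)) ∧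
    ∀ A : Set ℕ,
      (∀ n, A ∈ U n) ↔ (∑' n, a n * (if A ∈ U n then (1 : ℝ) else 0)) = 1 := by
  -- every series `∑ aₙ 𝟙_{𝔘ₙ}(A)` is dominated by `∑ aₙ`
  have hs : ∀ A : Set ℕ, Summable (fun n => a n * (if A ∈ U n then (1 : ℝ) else 0)) := by
    intro A
    refine Summable.of_nonneg_of_le (fun n => ?_) (fun n => ?_) hsum.summable
    · have := (ha n).le
      split_ifs <;> simp [this]
    · have := (ha n).le
      split_ifs <;> simp [this]
  refine ⟨⟨fun A => ?_, fun A B hAB => ?_, ?_, fun k => ?_⟩, fun A => ⟨fun h => ?_, fun h => ?_⟩⟩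
  · refine tsum_nonneg fun n => ?_
    have := (ha n).le
    split_ifs <;> simp [this]
  -- an ultrafilter contains `A ∪ B` iff it contains `A` or `B`, and never two disjoint sets
  · dsimp only
    rw [← (hs A).tsum_add (hs B)]
    refine tsum_congr fun n => ?_
    have hnot : ¬ (A ∈ U n ∧ B ∈ U n) := by
      rintro ⟨hA, hB⟩
      have hI := Filter.inter_mem (f := (U n : Filter ℕ)) hA hB
      rw [hAB.inter_eq] at hI
      exact (U n).empty_notMem hI
    have hU : A ∪ B ∈ U n ↔ A ∈ U n ∨ B ∈ U n := Ultrafilter.union_mem_iff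
    by_cases hA : A ∈ U n <;> by_cases hB : B ∈ U n <;> simp_all
  · have h1 : ∀ n, Set.univ ∈ U n := fun n => Filter.univ_mem (f := (U n : Filter ℕ))
    simpa [h1] using hsum.tsum_eq
  · have h0 : ∀ n, ({k} : Set ℕ) ∉ U n := by
      intro n hk
      have hc : ({k} : Set ℕ)ᶜ ∈ U n := hfree n (Set.finite_singleton k).compl_mem_cofinite
      exact Ultrafilter.compl_mem_iff_notMem.1 hc hk
    simp [h0]
  · simpa [h] using hsum.tsum_eq
  -- omitting a single term, which is positive, would make the sum strictly less than `1`
  · by_contra! hne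
    obtain ⟨m, hm⟩ := hne
    have hlt : (∑' n, a n * (if A ∈ U n then (1 : ℝ) else 0)) < ∑' n, a n := by
      refine Summable.tsum_lt_tsum (i := m) (fun n => ?_) ?_ (hs A) hsum.summable
      · have := (ha n).le
        split_ifs <;> simp [this]
      · simpa [hm] using ha m
    rw [hsum.tsum_eq, h] at hlt
    exact lt_irrefl _ hlt
end

section
/- Let μ be a statistical measure on ℕ and 𝔉_μ = {A ⊆ ℕ : μ(A) = 1} the filter generated by μ. Then 𝔉_μ is poor: every family (A_γ)_{γ∈Γ} of subsets of ℕ that are pairwise 𝔉_μ-almost disjoint and satisfy μ(A_γ) > 0 for every γ ∈ Γ is at most countable. -/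
namespace IsStatMeasure

variable {μ : Set ℕ → ℝ}

lemma inter_add_diff (hμ : IsStatMeasure μ) (A B : Set ℕ) : μ (A ∩ B) + μ (A \ B) = μ A := by
  rw [← hμ.2.1 _ _ Set.disjoint_sdiff_inter.symm, Set.inter_union_sdiff]

lemma mono (hμ : IsStatMeasure μ) {A B : Set ℕ} (h : A ⊆ B) : μ A ≤ μ B := by
  have h1 := hμ.inter_add_diff B A
  rw [Set.inter_eq_self_of_subset_right h] at h1
  linarith [hμ.1 (B \ A)]

lemma eq_zero_of_compl (hμ : IsStatMeasure μ) {A : Set ℕ} (h : μ Aᶜ = 1) : μ A = 0 := by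
  have h1 := hμ.2.1 A Aᶜ disjoint_compl_right
  rw [Set.union_compl_self, hμ.2.2.1, h] at h1
  linarith

lemma union_add_inter (hμ : IsStatMeasure μ) (A B : Set ℕ) :
    μ (A ∪ B) + μ (A ∩ B) = μ A + μ B := by
  have h1 := hμ.2.1 (A \ B) B Set.disjoint_sdiff_left
  rw [Set.sdiff_union_self] at h1
  linarith [hμ.inter_add_diff A B]

lemma biUnion_null (hμ : IsStatMeasure μ) (A : Set ℕ) (s : Finset (Set ℕ))
    (h : ∀ B ∈ s, μ (A ∩ B) = 0) : μ (A ∩ ⋃ B ∈ s, B) = 0 := by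
  classical
  induction s using Finset.induction_on with
  | empty =>
    have h1 := hμ.2.1 ∅ ∅ disjoint_bot_left
    simp only [Set.union_self] at h1
    simp only [Finset.notMem_empty, Set.iUnion_of_empty, Set.iUnion_empty, Set.inter_empty]
    linarith
  | insert B s _ ih =>
    have h1 := ih fun C hC => h C (Finset.mem_insert_of_mem hC)
    have h2 := h B (Finset.mem_insert_self B s)
    rw [Finset.set_biUnion_insert, Set.inter_union_distrib_left]
    have h3 := hμ.union_add_inter (A ∩ B) (A ∩ ⋃ C ∈ s, C)
    have h4 := hμ.1 ((A ∩ B) ∩ (A ∩ ⋃ C ∈ s, C))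
    have h5 := hμ.1 ((A ∩ B) ∪ (A ∩ ⋃ C ∈ s, C))
    linarith

lemma biUnion_eq_sum (hμ : IsStatMeasure μ) (s : Finset (Set ℕ))
    (h : ∀ A ∈ s, ∀ B ∈ s, A ≠ B → μ (A ∩ B) = 0) : μ (⋃ A ∈ s, A) = ∑ A ∈ s, μ A := by
  classical
  induction s using Finset.induction_on with
  | empty =>
    have h1 := hμ.2.1 ∅ ∅ disjoint_bot_left
    simp only [Set.union_self] at h1
    simp only [Finset.notMem_empty, Set.iUnion_of_empty, Set.iUnion_empty, Finset.sum_empty]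
    linarith
  | insert A s hA ih =>
    have h1 := ih fun B hB C hC =>
      h B (Finset.mem_insert_of_mem hB) C (Finset.mem_insert_of_mem hC)
    have h2 := hμ.biUnion_null A s fun B hB =>
      h A (Finset.mem_insert_self A s) B (Finset.mem_insert_of_mem hB)
        (ne_of_mem_of_not_mem hB hA).symm
    rw [Finset.set_biUnion_insert, Finset.sum_insert hA]
    linarith [hμ.union_add_inter A (⋃ C ∈ s, C)]

end IsStatMeasure

/-- The filter `𝔉_μ = {A : μ A = 1}` generated by a statistical measure `μ` is poor:
any family of sets of positive measure which are pairwise `𝔉_μ`-almost disjoint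
(i.e. `μ ((A ∩ B)ᶜ) = 1` for distinct members `A`, `B`) is at most countable. -/
theorem stmt_2 (μ : Set ℕ → ℝ) (hμ : IsStatMeasure μ)
    (𝒜 : Set (Set ℕ))
    (halmost : ∀ A ∈ 𝒜, ∀ B ∈ 𝒜, A ≠ B → μ ((A ∩ B)ᶜ) = 1)
    (hpos : ∀ A ∈ 𝒜, 0 < μ A) :
    𝒜.Countable := by
  have hsum : Summable fun A : 𝒜 => μ A := by
    refine summable_of_sum_le (c := 1) (fun A => hμ.1 A) fun s => ?_
    have hmem : ∀ A ∈ s.map (Function.Embedding.subtype (· ∈ 𝒜)), A ∈ 𝒜 := by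
      intro A hA
      obtain ⟨B, -, rfl⟩ := Finset.mem_map.1 hA
      exact B.2
    have h1 := hμ.biUnion_eq_sum (s.map (Function.Embedding.subtype (· ∈ 𝒜)))
      fun A hA B hB hAB => hμ.eq_zero_of_compl (halmost A (hmem A hA) B (hmem B hB) hAB)
    rw [Finset.sum_map] at h1
    calc ∑ A ∈ s, μ A = _ := h1.symm
      _ ≤ μ Set.univ := hμ.mono (Set.subset_univ _)
      _ = 1 := hμ.2.2.1
  have hsupp : (Function.support fun A : 𝒜 => μ A) = Set.univ :=
    Set.eq_univ_of_forall fun A => (hpos A A.2).ne'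
  have hcount := hsum.countable_support
  rw [hsupp, Set.countable_univ_iff] at hcount
  exact Set.countable_coe_iff.1 hcount
end

section
/- If 𝔉 is a conglomerated free filter on ℕ, then 𝔉 is not poor: there exists an uncountable family (A_γ)_{γ∈Γ} of pairwise 𝔉-almost disjoint sets with A_γ ∈ 𝔊(𝔉) for all γ ∈ Γ. Consequently, 𝔉 is not generated by any statistical measure. -/
/-- The set of codes of the finite initial segments of a binary sequence `x`. -/
def branch (x : ℕ → Bool) : Set ℕ :=
  Set.range fun n : ℕ => Encodable.encode ((List.range n).map x)

lemma branch_infinite (x : ℕ → Bool) : (branch x).Infinite := by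
  refine Set.infinite_range_of_injective fun m n h => ?_
  have := congrArg List.length (Encodable.encode_injective h)
  simpa using this

lemma branch_inter_finite {x y : ℕ → Bool} (hxy : x ≠ y) : (branch x ∩ branch y).Finite := by
  obtain ⟨k, hk⟩ := Function.ne_iff.1 hxy
  -- Common nodes have length at most `k`, a position where `x` and `y` differ.
  refine ((Set.finite_Iic k).image
    fun n : ℕ => Encodable.encode ((List.range n).map x)).subset ?_
  rintro _ ⟨⟨n, rfl⟩, ⟨m, hm⟩⟩
  refine ⟨n, ?_, rfl⟩
  by_contra hn
  have hn : k < n := by simpa using hn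
  have h := Encodable.encode_injective hm
  have hl : m = n := by simpa using congrArg List.length h
  subst hl
  exact hk ((List.map_inj_left.1 h k (List.mem_range.2 hn)).symm)

lemma compl_mem_iff_measure_eq_zero {F : Filter ℕ} {μ : Set ℕ → ℝ} (hμ : IsStatMeasure μ)
    (hF : ∀ A : Set ℕ, A ∈ F ↔ μ A = 1) (A : Set ℕ) : Aᶜ ∈ F ↔ μ A = 0 := by
  have h := hμ.2.1 A Aᶜ disjoint_compl_right
  rw [Set.union_compl_self, hμ.2.2.1] at h
  rw [hF]
  constructor <;> intro h' <;> linarith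

lemma measure_le_one {μ : Set ℕ → ℝ} (hμ : IsStatMeasure μ) (A : Set ℕ) : μ A ≤ 1 := by
  have h := hμ.2.1 A Aᶜ disjoint_compl_right
  rw [Set.union_compl_self, hμ.2.2.1] at h
  linarith [hμ.1 Aᶜ]

/-- Finite additivity persists when intersections are only null, i.e. have complement in `F`. -/
lemma measure_biUnion {F : Filter ℕ} {μ : Set ℕ → ℝ} (hμ : IsStatMeasure μ)
    (hF : ∀ A : Set ℕ, A ∈ F ↔ μ A = 1) (s : Finset (Set ℕ))
    (hs : ∀ A ∈ s, ∀ B ∈ s, A ≠ B → (A ∩ B)ᶜ ∈ F) :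
    μ (⋃ A ∈ s, A) = ∑ A ∈ s, μ A := by
  classical
  induction s using Finset.induction_on with
  | empty =>
    have h := hμ.2.1 ∅ ∅ (Set.disjoint_empty _)
    rw [Set.union_empty] at h
    simp
    linarith
  | insert A s hA ih =>
    have ih := ih fun B hB C hC =>
      hs B (Finset.mem_insert_of_mem hB) C (Finset.mem_insert_of_mem hC)
    rw [Finset.sum_insert hA, Finset.set_biUnion_insert, ← ih]
    set U : Set ℕ := ⋃ B ∈ s, B with hU
    have hnull : μ (A ∩ U) = 0 := by
      rw [← compl_mem_iff_measure_eq_zero hμ hF]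
      have hmem : (⋂ B ∈ s, (A ∩ B)ᶜ) ∈ F :=
        (Filter.biInter_finset_mem s).2 fun B hB =>
          hs A (Finset.mem_insert_self _ _) B (Finset.mem_insert_of_mem hB)
            (fun h => hA (h ▸ hB))
      convert hmem using 1
      rw [hU, Set.inter_iUnion₂, Set.compl_iUnion₂]
    have h1 := hμ.2.1 A (U \ A) Set.disjoint_sdiff_right
    have h2 := hμ.2.1 (A ∩ U) (U \ A)
      (Set.disjoint_sdiff_right.mono_left Set.inter_subset_left)
    rw [Set.union_sdiff_self] at h1
    rw [Set.inter_comm, Set.inter_union_sdiff, Set.inter_comm] at h2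
    linarith

lemma sum_measure_le_one {F : Filter ℕ} {μ : Set ℕ → ℝ} (hμ : IsStatMeasure μ)
    (hF : ∀ A : Set ℕ, A ∈ F ↔ μ A = 1) (s : Finset (Set ℕ))
    (hs : ∀ A ∈ s, ∀ B ∈ s, A ≠ B → (A ∩ B)ᶜ ∈ F) : ∑ A ∈ s, μ A ≤ 1 :=
  measure_biUnion hμ hF s hs ▸ measure_le_one hμ _

/-- Filters generated by statistical measures are poor. -/
lemma countable_of_statMeasure {F : Filter ℕ} {μ : Set ℕ → ℝ} (hμ : IsStatMeasure μ)
    (hF : ∀ A : Set ℕ, A ∈ F ↔ μ A = 1) (𝒜 : Set (Set ℕ))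
    (had : ∀ A ∈ 𝒜, ∀ B ∈ 𝒜, A ≠ B → (A ∩ B)ᶜ ∈ F)
    (hgr : ∀ A ∈ 𝒜, ∀ B ∈ F, (A ∩ B).Nonempty) : 𝒜.Countable := by
  have hcover : 𝒜 ⊆ ⋃ k : ℕ, {A ∈ 𝒜 | 1 / ((k : ℝ) + 1) < μ A} := by
    intro A hA
    have hne : μ A ≠ 0 := fun h0 => by
      obtain ⟨a, ha, ha'⟩ := hgr A hA Aᶜ ((compl_mem_iff_measure_eq_zero hμ hF A).2 h0)
      exact ha' ha
    obtain ⟨k, hk⟩ := exists_nat_one_div_lt (lt_of_le_of_ne (hμ.1 A) hne.symm)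
    exact Set.mem_iUnion.2 ⟨k, hA, hk⟩
  refine (Set.countable_iUnion fun k => Set.Finite.countable ?_).mono hcover
  by_contra hinf
  obtain ⟨s, hs, hcard⟩ := Set.Infinite.exists_subset_card_eq hinf (k + 1)
  have hle := sum_measure_le_one hμ hF s fun A hA B hB => had A (hs hA).1 B (hs hB).1
  have hlt : ∑ _A ∈ s, 1 / ((k : ℝ) + 1) < ∑ A ∈ s, μ A :=
    Finset.sum_lt_sum_of_nonempty (Finset.card_pos.1 (by omega)) fun A hA => (hs hA).2
  rw [Finset.sum_const, hcard, nsmul_eq_mul] at hlt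
  push_cast at hlt
  rw [mul_one_div_cancel (by positivity)] at hlt
  linarith

/-- A conglomerated free filter `F` (witnessed by the disjoint sequence `D` of sets of
the ideal of `F` whose unions along infinite index sets lie in the grill of `F`) is not
poor: there is an uncountable family of pairwise `F`-almost disjoint members of the grill.
Consequently, `F` is not generated by any statistical measure. -/
theorem stmt_3 (F : Filter ℕ) (hne : F.NeBot) (hfree : F ≤ Filter.cofinite)
    (D : ℕ → Set ℕ) (hDdisj : Pairwise (Function.onFun Disjoint D))
    (hDideal : ∀ n, (D n)ᶜ ∈ F)
    (hDgrill : ∀ M : Set ℕ, M.Infinite →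
      ∀ B ∈ F, ((⋃ n ∈ M, D n) ∩ B).Nonempty) :
    (∃ 𝒜 : Set (Set ℕ), ¬ 𝒜.Countable ∧
      (∀ A ∈ 𝒜, ∀ B ∈ 𝒜, A ≠ B → (A ∩ B)ᶜ ∈ F) ∧
      (∀ A ∈ 𝒜, ∀ B ∈ F, (A ∩ B).Nonempty)) ∧
    ¬ ∃ μ : Set ℕ → ℝ, IsStatMeasure μ ∧ ∀ A : Set ℕ, A ∈ F ↔ μ A = 1 := by
  have hfam : ∃ 𝒜 : Set (Set ℕ), ¬ 𝒜.Countable ∧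
      (∀ A ∈ 𝒜, ∀ B ∈ 𝒜, A ≠ B → (A ∩ B)ᶜ ∈ F) ∧
      (∀ A ∈ 𝒜, ∀ B ∈ F, (A ∩ B).Nonempty) := by
    let A : (ℕ → Bool) → Set ℕ := fun x => ⋃ n ∈ branch x, D n
    have had : ∀ x y, x ≠ y → (A x ∩ A y)ᶜ ∈ F := by
      intro x y hxy
      have hmem : (⋂ n ∈ branch x ∩ branch y, (D n)ᶜ) ∈ F :=
        (Filter.biInter_mem (branch_inter_finite hxy)).2 fun n _ => hDideal n
      refine Filter.mem_of_superset hmem ?_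
      rintro a ha ⟨hax, hay⟩
      obtain ⟨n, hn, han⟩ := Set.mem_iUnion₂.1 hax
      obtain ⟨m, hm, ham⟩ := Set.mem_iUnion₂.1 hay
      have hnm : n = m := by
        by_contra hne'
        exact Set.disjoint_left.1 (hDdisj hne') han ham
      subst hnm
      exact Set.mem_iInter₂.1 ha n ⟨hn, hm⟩ han
    have hgr : ∀ x, ∀ B ∈ F, (A x ∩ B).Nonempty :=
      fun x => hDgrill _ (branch_infinite x)
    have hinj : Function.Injective A := by
      intro x y hA
      by_contra hxy
      have h := had x y hxy
      rw [← hA, Set.inter_self] at h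
      obtain ⟨a, ha, ha'⟩ := hgr x _ h
      exact ha' ha
    refine ⟨Set.range A, fun hc => ?_, ?_, ?_⟩
    · have : Countable (Set.range A) := hc.to_subtype
      have : Countable (ℕ → Bool) := (Set.rangeFactorization_injective.2 hinj).countable
      -- Diagonal argument: `ℕ → Bool` is uncountable.
      obtain ⟨f, hf⟩ := exists_surjective_nat (ℕ → Bool)
      obtain ⟨n, hn⟩ := hf fun n => !f n n
      simpa using congrFun hn n
    · rintro _ ⟨x, rfl⟩ _ ⟨y, rfl⟩ h
      exact had x y fun hxy => h (congrArg A hxy)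
    · rintro _ ⟨x, rfl⟩
      exact hgr x
  refine ⟨hfam, ?_⟩
  rintro ⟨μ, hμ, hF⟩
  obtain ⟨𝒜, hunc, had, hgr⟩ := hfam
  exact hunc (countable_of_statMeasure hμ hF 𝒜 had hgr)
end

section
/- Let s = (s_k)_{k∈ℕ} be a sequence of non-negative reals with ∑_{k=1}^∞ s_k = ∞, and let 𝔉^s be the summable filter, i.e. 𝔉^s = {A ⊆ ℕ : ∑_{k∈ℕ∖A} s_k < ∞}. Then 𝔉^s is conglomerated; in particular, it is not generated by any statistical measure. -/
open Filter Topology in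
/-- A non-negative finitely additive set function on `ℚ` that vanishes on finite sets also
vanishes on some infinite set. -/
lemma no_strictly_positive (ν : Set ℚ → ℝ) (h0 : ∀ A, 0 ≤ ν A)
    (hadd : ∀ A B, Disjoint A B → ν (A ∪ B) = ν A + ν B)
    (hfin : ∀ A : Set ℚ, A.Finite → ν A = 0)
    (hinf : ∀ A : Set ℚ, A.Infinite → 0 < ν A) : False := by
  have hmono : ∀ A B, A ⊆ B → ν A ≤ ν B := by
    intro A B hAB
    have h := hadd A (B \ A) Set.disjoint_sdiff_right
    rw [Set.union_sdiff_cancel hAB] at h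
    linarith [h0 (B \ A)]
  let f : ℝ → ℝ := fun r => ν {q : ℚ | (q : ℝ) < r}
  have hf : Monotone f := fun a b hab => hmono _ _ fun q (hq : (q : ℝ) < a) => hq.trans_le hab
  obtain ⟨r, hr⟩ : ∃ r, ContinuousAt f r := by
    by_contra! h
    have hc := hf.countable_not_continuousAt
    rw [show {x | ¬ ContinuousAt f x} = Set.univ from Set.eq_univ_of_forall h] at hc
    exact Set.not_countable_univ hc
  obtain ⟨u, hu, hur, hlim⟩ := Real.exists_seq_rat_strictMono_tendsto r
  have hpos := hinf _ (Set.infinite_range_of_injective hu.injective)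
  have key : ∀ n, f (u n) ≤ f r - ν (Set.range u) := by
    intro n
    -- The range of `u` splits into a finite part below `u n` and a part in `[u n, r)`.
    have e1 : ν (Set.range u) = ν (u '' Set.Iio n) + ν (u '' Set.Ici n) := by
      rw [← hadd, ← Set.image_union, Set.Iio_union_Ici, Set.image_univ]
      exact (Set.disjoint_image_iff hu.injective).2 (Set.Iio_disjoint_Ici le_rfl)
    rw [hfin _ ((Set.finite_Iio n).image u)] at e1
    have e2 := hadd {q : ℚ | (q : ℝ) < u n} (u '' Set.Ici n) (by
      rw [Set.disjoint_left]
      rintro _ hq ⟨m, hm, rfl⟩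
      have h1 : ((u m : ℚ) : ℝ) < u n := hq
      have h2 : u n ≤ u m := hu.monotone hm
      exact absurd (Rat.cast_lt.1 h1) h2.not_gt)
    have e3 := hmono ({q : ℚ | (q : ℝ) < u n} ∪ u '' Set.Ici n) {q : ℚ | (q : ℝ) < r} (by
      rintro q (hq | ⟨m, -, rfl⟩)
      · exact lt_trans hq (hur n)
      · exact hur m)
    change ν _ ≤ ν _ - _
    linarith
  have := le_of_tendsto (hr.tendsto.comp hlim) (Eventually.of_forall key)
  linarith

open Filter Topology in
/-- The blocks are consecutive intervals on each of which `s` sums to at least `1`; being finite,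
they belong to the summable ideal. -/
lemma exists_blocks (s : ℕ → ℝ) (hs : ∀ k, 0 ≤ s k) (hdiv : ¬ Summable s) :
    ∃ D : ℕ → Set ℕ, Pairwise (Function.onFun Disjoint D) ∧ (∀ n, (D n).Finite) ∧
      ∀ M : Set ℕ, M.Infinite →
        ¬ Summable fun k : (⋃ n ∈ M, D n : Set ℕ) => s ↑k := by
  have ht := (not_summable_iff_tendsto_nat_atTop_of_nonneg hs).1 hdiv
  have hstep : ∀ a : ℕ, ∃ b, a < b ∧ 1 ≤ ∑ k ∈ Finset.Ico a b, s k := by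
    intro a
    obtain ⟨b, hb, hab⟩ := ((ht.eventually_ge_atTop (∑ k ∈ Finset.range a, s k + 1)).and
      (eventually_gt_atTop a)).exists
    refine ⟨b, hab, ?_⟩
    rw [Finset.sum_Ico_eq_sub _ hab.le]
    linarith
  choose g hg hg1 using hstep
  let N : ℕ → ℕ := fun n => g^[n] 0
  have hN : ∀ n, N (n + 1) = g (N n) := fun n => Function.iterate_succ_apply' g n 0
  have hNmono : StrictMono N := strictMono_nat_of_lt_succ fun n => by rw [hN]; exact hg _
  refine ⟨fun n => Set.Ico (N n) (N (n + 1)), hNmono.monotone.pairwise_disjoint_on_Ico_succ,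
    fun n => Set.finite_Ico _ _, fun M hM hsum => ?_⟩
  set U : Set ℕ := ⋃ n ∈ M, Set.Ico (N n) (N (n + 1)) with hU
  have hsum' : Summable (U.indicator s) := summable_subtype_iff_indicator.1 hsum
  have h1 := hsum'.hasSum.tendsto_sum_nat.comp hNmono.tendsto_atTop
  have h2 := (h1.comp (tendsto_add_atTop_nat 1)).sub h1
  rw [sub_self] at h2
  obtain ⟨n0, hn0⟩ := eventually_atTop.1 (h2.eventually_lt_const one_pos)
  obtain ⟨n, hnM, hn⟩ := hM.exists_gt n0
  have h3 := hn0 n hn.le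
  simp only [Function.comp_apply] at h3
  rw [← Finset.sum_Ico_eq_sub _ (hNmono.monotone n.le_succ)] at h3
  have h4 : ∑ k ∈ Finset.Ico (N n) (N (n + 1)), U.indicator s k
      = ∑ k ∈ Finset.Ico (N n) (N (n + 1)), s k := by
    refine Finset.sum_congr rfl fun k hk => Set.indicator_of_mem ?_ s
    exact Set.mem_biUnion hnM (Finset.mem_Ico.1 hk)
  have h5 := hg1 (N n)
  rw [← hN] at h5
  linarith

/-- For a sequence `s` of non-negative reals with `∑ s_k = ∞`, the summable filter
`𝔉^s = {A : ∑_{k ∉ A} s_k < ∞}` is conglomerated: there is a disjoint sequence `D n`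
of sets of its ideal (i.e. with `∑_{k ∈ D n} s_k < ∞`) such that the union of any
infinite subfamily lies in the grill (i.e. `∑` over the union diverges).
In particular, `𝔉^s` is not generated by any statistical measure. -/
theorem stmt_5 (s : ℕ → ℝ) (hs : ∀ k, 0 ≤ s k) (hdiv : ¬ Summable s) :
    (∃ D : ℕ → Set ℕ, Pairwise (Function.onFun Disjoint D) ∧
      (∀ n, Summable fun k : (D n : Set ℕ) => s ↑k) ∧
      ∀ M : Set ℕ, M.Infinite →
        ¬ Summable fun k : (⋃ n ∈ M, D n : Set ℕ) => s ↑k) ∧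
    ¬ ∃ μ : Set ℕ → ℝ, IsStatMeasure μ ∧
      ∀ A : Set ℕ, (Summable fun k : (Aᶜ : Set ℕ) => s ↑k) ↔ μ A = 1 := by
  obtain ⟨D, hD, hDfin, hDinf⟩ := exists_blocks s hs hdiv
  have hsumfin : ∀ B : Set ℕ, B.Finite → Summable fun k : B => s ↑k := fun B hB =>
    haveI := hB.to_subtype
    Summable.of_finite
  refine ⟨⟨D, hD, fun n => hsumfin _ (hDfin n), hDinf⟩, ?_⟩
  rintro ⟨μ, ⟨h0, hadd, huniv, -⟩, hgen⟩
  have hzero : ∀ B : Set ℕ, (Summable fun k : B => s ↑k) ↔ μ B = 0 := by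
    intro B
    have h := hgen Bᶜ
    rw [compl_compl] at h
    have h' := hadd B Bᶜ disjoint_compl_right
    rw [Set.union_compl_self, huniv] at h'
    rw [h]
    constructor <;> intro <;> linarith
  let e : ℚ ≃ ℕ := Denumerable.eqv ℚ
  have hU : ∀ A : Set ℚ, ⋃ q ∈ A, D (e q) = ⋃ n ∈ e '' A, D n := fun A => by
    rw [Set.biUnion_image]
  refine no_strictly_positive (fun A => μ (⋃ q ∈ A, D (e q))) (fun A => h0 _) ?_ ?_ ?_
  · intro A B hAB
    simp only [Set.biUnion_union]
    refine hadd _ _ ?_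
    simp only [Set.disjoint_iUnion_left, Set.disjoint_iUnion_right]
    intro q hq p hp
    refine hD fun h => Set.disjoint_left.1 hAB hp ?_
    have h' := e.injective h
    subst h'
    exact hq
  · intro A hA
    exact (hzero _).1 (hsumfin _ (hA.biUnion fun q _ => hDfin _))
  · intro A hA
    refine lt_of_le_of_ne (h0 _) fun h => ?_
    refine hDinf (e '' A) (hA.image e.injective.injOn) ?_
    rw [← hU]
    exact (hzero _).2 h.symm
end

section
/- The statistical-convergence filter 𝔉_st = {A ⊆ ℕ : the natural density of A equals 1}, where the natural density of A is lim_{k→∞} #(A ∩ {1,…,k})/k when it exists, is not generated by any statistical measure: there is no statistical measure μ with 𝔉_st = {A ⊆ ℕ : μ(A) = 1}. -/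
/-- `A ⊆ ℕ` has natural density one:
`#(A ∩ {0,…,k-1}) / k → 1` as `k → ∞`. -/
def HasDensityOne (A : Set ℕ) : Prop :=
  Filter.Tendsto
    (fun k => (∑ i ∈ Finset.range k, Set.indicator A (fun _ => (1 : ℝ)) i) / (k : ℝ))
    Filter.atTop (nhds 1)

/-- The codes of the initial segments of the binary sequence `x`; these sets are infinite, and
almost disjoint for distinct sequences. -/
def branchCodes (x : ℕ → Bool) : Set ℕ :=
  Set.range fun n : ℕ => Encodable.encode (List.ofFn fun i : Fin n => x i)

/-- The union of the dyadic blocks `[2 ^ n, 2 ^ (n + 1))` over `n ∈ S`. The point `0` is put into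
the block `n = 0`, since `Nat.log 2 0 = 0`. -/
def blockUnion (S : Set ℕ) : Set ℕ := {i | Nat.log 2 i ∈ S}

lemma branchCodes_infinite (x : ℕ → Bool) : (branchCodes x).Infinite := by
  apply Set.infinite_range_of_injective
  intro m n h
  have h' := congrArg List.length (Encodable.encode_injective h)
  simpa using h'

lemma branchCodes_inter_finite {x y : ℕ → Bool} (hxy : x ≠ y) :
    (branchCodes x ∩ branchCodes y).Finite := by
  obtain ⟨j, hj⟩ := Function.ne_iff.mp hxy
  -- A common initial segment of `x` and `y` has length at most `j`.
  refine ((Set.finite_Iic j).image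
    fun n : ℕ => Encodable.encode (List.ofFn fun i : Fin n => x i)).subset ?_
  rintro _ ⟨⟨n, rfl⟩, ⟨m, hm⟩⟩
  refine ⟨n, ?_, rfl⟩
  have h := Encodable.encode_injective hm
  have hl : m = n := by simpa using congrArg List.length h
  subst hl
  by_contra hlt
  have hlt' : j < m := not_le.mp hlt
  have h2 := congrFun (List.ofFn_injective h) ⟨j, hlt'⟩
  exact hj h2.symm

lemma blockUnion_finite {S : Set ℕ} (hS : S.Finite) : (blockUnion S).Finite := by
  obtain ⟨b, hb⟩ := hS.bddAbove
  refine (Set.finite_Iio (2 ^ (b + 1))).subset fun i hi => ?_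
  have h1 : Nat.log 2 i < b + 1 := Nat.lt_succ_of_le (hb hi)
  exact Nat.lt_pow_of_log_lt (by norm_num) h1

lemma not_hasDensityOne_compl {S : Set ℕ} (hS : S.Infinite) :
    ¬ HasDensityOne (blockUnion S)ᶜ := by
  intro h
  have hev := h.eventually (lt_mem_nhds (show (1 / 2 : ℝ) < 1 by norm_num))
  obtain ⟨N, hN⟩ := Filter.eventually_atTop.mp hev
  obtain ⟨n, hn, hnN⟩ := hS.exists_gt N
  have hk : N ≤ 2 ^ (n + 1) := by
    have := Nat.lt_two_pow_self (n := n + 1)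
    omega
  have hlt := hN _ hk
  have hsum : ∑ i ∈ Finset.range (2 ^ (n + 1)),
      Set.indicator (blockUnion S)ᶜ (fun _ => (1 : ℝ)) i ≤ 2 ^ n := by
    rw [← Finset.sum_range_add_sum_Ico _ (Nat.pow_le_pow_right (by norm_num) (Nat.le_succ n))]
    have h1 : ∑ i ∈ Finset.range (2 ^ n),
        Set.indicator (blockUnion S)ᶜ (fun _ => (1 : ℝ)) i ≤ 2 ^ n := by
      refine (Finset.sum_le_card_nsmul _ _ 1 fun i _ => ?_).trans (by simp)
      exact Set.indicator_le_self' (fun _ _ => zero_le_one) i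
    have h2 : ∑ i ∈ Finset.Ico (2 ^ n) (2 ^ (n + 1)),
        Set.indicator (blockUnion S)ᶜ (fun _ => (1 : ℝ)) i = 0 := by
      refine Finset.sum_eq_zero fun i hi => Set.indicator_of_notMem ?_ _
      rw [Finset.mem_Ico] at hi
      have hlog : Nat.log 2 i = n := Nat.log_eq_of_pow_le_of_lt_pow hi.1 hi.2
      simpa [blockUnion, hlog] using hn
    linarith
  have hpos : (0 : ℝ) < 2 ^ n := by positivity
  push_cast at hlt
  rw [lt_div_iff₀ (by positivity), pow_succ] at hlt
  linarith

namespace IsStatMeasure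

variable {μ : Set ℕ → ℝ}

lemma empty (h : IsStatMeasure μ) : μ ∅ = 0 := by
  have := h.2.1 ∅ ∅ (by simp)
  simp at this
  exact this

lemma finite_eq_zero (h : IsStatMeasure μ) {A : Set ℕ} (hA : A.Finite) : μ A = 0 := by
  induction A, hA using Set.Finite.induction_on with
  | empty => exact h.empty
  | @insert a s ha _ ih =>
    rw [Set.insert_eq, h.2.1 _ _ (Set.disjoint_singleton_left.mpr ha), h.2.2.2, ih, add_zero]

lemma union_of_finite_inter (h : IsStatMeasure μ) {A B : Set ℕ} (hAB : (A ∩ B).Finite) :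
    μ (A ∪ B) = μ A + μ B := by
  have h1 := h.2.1 A (B \ A) Set.disjoint_sdiff_right
  have h2 := h.2.1 (A ∩ B) (B \ A) (Set.disjoint_sdiff_right.mono_left Set.inter_subset_left)
  rw [Set.union_sdiff_self] at h1
  rw [Set.inter_comm, Set.inter_union_sdiff, Set.inter_comm, h.finite_eq_zero hAB] at h2
  linarith

lemma add_compl (h : IsStatMeasure μ) (A : Set ℕ) : μ A + μ Aᶜ = 1 := by
  rw [← h.2.1 A Aᶜ disjoint_compl_right, Set.union_compl_self, h.2.2.1]

lemma le_one (h : IsStatMeasure μ) (A : Set ℕ) : μ A ≤ 1 := by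
  linarith [h.add_compl A, h.1 Aᶜ]

lemma sum_eq_biUnion (h : IsStatMeasure μ) {ι : Type*} (A : ι → Set ℕ)
    (hA : ∀ x y, x ≠ y → (A x ∩ A y).Finite) (F : Finset ι) :
    μ (⋃ x ∈ F, A x) = ∑ x ∈ F, μ (A x) := by
  classical
  induction F using Finset.induction_on with
  | empty => simpa using h.empty
  | insert a s ha ih =>
    rw [Finset.set_biUnion_insert, Finset.sum_insert ha, h.union_of_finite_inter, ih]
    rw [Set.inter_iUnion₂]
    refine s.finite_toSet.biUnion fun y hy => hA _ _ ?_
    rintro rfl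
    exact ha hy

/-- A pairwise almost disjoint family of sets of positive measure is countable. -/
lemma countable_of_pos (h : IsStatMeasure μ) {ι : Type*} (A : ι → Set ℕ)
    (hA : ∀ x y, x ≠ y → (A x ∩ A y).Finite) (hpos : ∀ x, 0 < μ (A x)) : Countable ι := by
  have hs : Summable fun x => μ (A x) :=
    summable_of_sum_le (fun x => h.1 _) (c := 1) fun F => by
      rw [← h.sum_eq_biUnion A hA F]
      exact h.le_one _
  have hc := hs.countable_support
  have hu : (Function.support fun x => μ (A x)) = Set.univ :=
    Set.eq_univ_of_forall fun x => (hpos x).ne'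
  rw [hu] at hc
  exact Set.countable_univ_iff.mp hc

end IsStatMeasure

/-- The statistical-convergence filter `𝔉_st` of sets of natural density `1`
is not generated by any statistical measure. -/
theorem stmt_7 :
    ¬ ∃ μ : Set ℕ → ℝ, IsStatMeasure μ ∧
      ∀ A : Set ℕ, HasDensityOne A ↔ μ A = 1 := by
  rintro ⟨μ, h, hμ⟩
  have hc : Countable (ℕ → Bool) := by
    refine h.countable_of_pos (fun x => blockUnion (branchCodes x))
      (fun x y hxy => blockUnion_finite (branchCodes_inter_finite hxy)) fun x => ?_
    refine (h.1 _).lt_of_ne' fun h0 => not_hasDensityOne_compl (branchCodes_infinite x) ?_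
    rw [hμ]
    linarith [h.add_compl (blockUnion (branchCodes x))]
  -- Cantor's diagonal argument.
  obtain ⟨f, hf⟩ := exists_surjective_nat (ℕ → Bool)
  obtain ⟨n, hn⟩ := hf fun n => !f n n
  simpa using congrFun hn n
end

section
/- Let 𝔉_0 be a free filter and 𝔘 a free ultrafilter on ℕ such that 𝔉_0 ⊄ 𝔘, and set 𝔉 = 𝔉_0 ∩ 𝔘. Then for every D ∈ 𝔉 there exist disjoint sets A and B with D = A ∪ B, A ∈ 𝔘 and B ∈ 𝔉_0; moreover, A can be chosen so that the trace 𝔉|_A = {A ∩ C : C ∈ 𝔉} equals the trace 𝔘|_A = {A ∩ C : C ∈ 𝔘}. -/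
/-- Let `F₀` be a free filter and `U` a free ultrafilter on ℕ with `F₀ ⊄ U`, and let
`𝔉 = F₀ ∩ U`. Then every `D ∈ 𝔉` splits as a disjoint union `D = A ∪ B` with `A ∈ U`
and `B ∈ F₀`; moreover, `A` can be chosen so that the trace of `𝔉` on `A` coincides
with the trace of `U` on `A`. -/
theorem stmt_12 (F₀ : Filter ℕ) (hne : F₀.NeBot) (hfree : F₀ ≤ Filter.cofinite)
    (U : Ultrafilter ℕ) (hU : (U : Filter ℕ) ≤ Filter.cofinite)
    (hnsub : ¬ ∀ A : Set ℕ, A ∈ F₀ → A ∈ U)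
    (D : Set ℕ) (hD₀ : D ∈ F₀) (hDU : D ∈ U) :
    ∃ A B : Set ℕ, Disjoint A B ∧ D = A ∪ B ∧ A ∈ U ∧ B ∈ F₀ ∧
      ∀ S : Set ℕ,
        (∃ C : Set ℕ, (C ∈ F₀ ∧ C ∈ U) ∧ S = A ∩ C) ↔
        (∃ C : Set ℕ, C ∈ U ∧ S = A ∩ C) := by
  -- A witness `E` of `F₀ ⊄ U` splits `D` into `D \ E` and `D ∩ E`.
  push Not at hnsub
  obtain ⟨E, hE₀, hEU⟩ := hnsub
  have hEc : Eᶜ ∈ U := Ultrafilter.compl_mem_iff_notMem.mpr hEU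
  refine ⟨D \ E, D ∩ E, Set.disjoint_sdiff_inter, (Set.sdiff_union_inter D E).symm,
    Filter.inter_mem hDU hEc, Filter.inter_mem hD₀ hE₀, fun S => ⟨?_, ?_⟩⟩
  · rintro ⟨C, ⟨-, hC⟩, rfl⟩
    exact ⟨C, hC, rfl⟩
  · rintro ⟨C, hC, rfl⟩
    -- Enlarging `C` by `E` puts it in `F₀` without changing its trace on `D \ E`.
    refine ⟨C ∪ E, ⟨Filter.mem_of_superset hE₀ Set.subset_union_right,
      Filter.mem_of_superset hC Set.subset_union_left⟩, ?_⟩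
    ext x
    simp only [Set.mem_inter_iff, Set.mem_sdiff, Set.mem_union]
    tauto
end

section
/- Let W be a minimal collection of free ultrafilters on ℕ and 𝔉 = ⋂ W. Then for every 𝔘 ∈ W there exists A ∈ 𝔘 such that the trace 𝔉|_A = {A ∩ B : B ∈ 𝔉} equals the trace 𝔘|_A = {A ∩ B : B ∈ 𝔘}. -/
/-- If `W` is a minimal collection of free ultrafilters and `𝔉 = ⋂ W`, then for every
`U ∈ W` there is `A ∈ U` such that the trace of `𝔉` on `A` equals the trace of `U`
on `A`. -/
theorem stmt_13 (W : Set (Ultrafilter ℕ))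
    (hfree : ∀ V ∈ W, (V : Filter ℕ) ≤ Filter.cofinite)
    (hnt : W.Nontrivial)
    (hmin : ∀ V ∈ W, ¬ ∀ A : Set ℕ,
      ((∀ V' ∈ W, A ∈ V') ↔ (∀ V' ∈ W \ {V}, A ∈ V')))
    (U : Ultrafilter ℕ) (hU : U ∈ W) :
    ∃ A ∈ U, ∀ S : Set ℕ,
      (∃ B : Set ℕ, (∀ V ∈ W, B ∈ V) ∧ S = A ∩ B) ↔
      (∃ B : Set ℕ, B ∈ U ∧ S = A ∩ B) := by
  -- Minimality separates `U` from the rest: some `C ∉ U` lies in every other member of `W`.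
  obtain ⟨C, hC, hCU⟩ : ∃ C : Set ℕ, (∀ V ∈ W \ {U}, C ∈ V) ∧ C ∉ U := by
    by_contra! hcon
    refine hmin U hU fun A => ⟨fun h V hV => h V hV.1, fun h V hV => ?_⟩
    by_cases hVU : V = U
    · exact hVU ▸ hcon A h
    · exact h V ⟨hV, hVU⟩
  refine ⟨Cᶜ, Ultrafilter.compl_mem_iff_notMem.mpr hCU, fun S => ⟨?_, ?_⟩⟩
  · rintro ⟨B, hB, rfl⟩
    exact ⟨B, hB U hU, rfl⟩
  · rintro ⟨B, hB, rfl⟩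
    -- `B ∪ C` lies in every member of `W` and has the same trace on `Cᶜ` as `B`.
    refine ⟨B ∪ C, fun V hV => ?_, ?_⟩
    · by_cases hVU : V = U
      · exact hVU ▸ Filter.mem_of_superset hB Set.subset_union_left
      · exact Filter.mem_of_superset (hC V ⟨hV, hVU⟩) Set.subset_union_right
    · ext x
      simp only [Set.mem_inter_iff, Set.mem_compl_iff, Set.mem_union]
      tauto
end

section
/- For every cardinal α with 2 ≤ α and α less than the cardinality of the continuum, there exists a collection W of free ultrafilters on ℕ of cardinality exactly α that is minimal: for every 𝔘 ∈ W, ⋂ W ≠ ⋂ (W ∖ {𝔘}). Consequently, the free filter ⋂ W has a minimal representation of cardinality α. -/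
/-!
The branches of the binary tree form an almost disjoint family of continuum many infinite subsets
of `ℕ`: code the finite initial segments of each `x : ℕ → Bool` by natural numbers. A free
ultrafilter concentrated on each branch gives a family of ultrafilters in which every member `U`
is separated from all the others by a single set, so that every subfamily is minimal: the
complement of the branch of `U` lies in every other member but not in `U`. Selecting `α` branches
gives the collection.
-/

/-- The code of the initial segment of length `n` of the branch `x` of the binary tree. -/
def branchCode (x : ℕ → Bool) (n : ℕ) : ℕ :=
  Encodable.encode ((List.range n).map x)

lemma branchCode_eq {x y : ℕ → Bool} {n m : ℕ} (h : branchCode x n = branchCode y m) :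
    n = m ∧ ∀ k < n, x k = y k := by
  have h' := Encodable.encode_injective h
  have hl : n = m := by simpa using congrArg List.length h'
  subst hl
  refine ⟨rfl, fun k hk => ?_⟩
  rw [List.map_inj_left] at h'
  exact h' k (List.mem_range.2 hk)

lemma branchCode_injective (x : ℕ → Bool) : Function.Injective (branchCode x) :=
  fun _ _ h => (branchCode_eq h).1

/-- A free ultrafilter containing the branch `x`. -/
noncomputable def branchUltrafilter (x : ℕ → Bool) : Ultrafilter ℕ :=
  (Filter.hyperfilter ℕ).map (branchCode x)

lemma branchUltrafilter_le_cofinite (x : ℕ → Bool) :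
    (branchUltrafilter x : Filter ℕ) ≤ Filter.cofinite :=
  (branchCode_injective x).tendsto_cofinite.mono_left Filter.hyperfilter_le_cofinite

lemma range_mem_branchUltrafilter (x : ℕ → Bool) :
    Set.range (branchCode x) ∈ branchUltrafilter x :=
  Filter.range_mem_map

/-- Distinct branches meet in a finite set, so the ultrafilter of one avoids the other. -/
lemma compl_range_mem_branchUltrafilter {x y : ℕ → Bool} (hxy : x ≠ y) :
    (Set.range (branchCode x))ᶜ ∈ branchUltrafilter y := by
  obtain ⟨k, hk⟩ := Function.ne_iff.1 hxy
  refine Filter.hyperfilter_le_cofinite (Filter.mem_cofinite.2 ((Set.finite_Iic k).subset ?_))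
  intro n hn
  obtain ⟨m, hm⟩ := not_not.1 hn
  obtain ⟨rfl, h⟩ := branchCode_eq hm
  exact not_lt.1 fun hlt => hk (h k hlt)

lemma not_compl_range_mem_branchUltrafilter (x : ℕ → Bool) :
    (Set.range (branchCode x))ᶜ ∉ branchUltrafilter x :=
  Ultrafilter.compl_notMem_iff.2 (range_mem_branchUltrafilter x)

lemma branchUltrafilter_injective : Function.Injective branchUltrafilter := by
  intro x y h
  by_contra hxy
  exact not_compl_range_mem_branchUltrafilter x (h ▸ compl_range_mem_branchUltrafilter hxy)

/-- For every cardinal `α` with `2 ≤ α` smaller than the continuum there exists a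
minimal collection of free ultrafilters on ℕ of cardinality exactly `α`, hence a free
filter with a minimal representation of that cardinality. -/
theorem stmt_15 (α : Cardinal) (h2 : 2 ≤ α) (hα : α < Cardinal.continuum) :
    ∃ W : Set (Ultrafilter ℕ),
      (∀ U ∈ W, (U : Filter ℕ) ≤ Filter.cofinite) ∧
      Cardinal.mk W = α ∧
      ∀ U ∈ W, ¬ ∀ A : Set ℕ,
        ((∀ V ∈ W, A ∈ V) ↔ (∀ V ∈ W \ {U}, A ∈ V)) := by
  have hc : α ≤ Cardinal.mk (ℕ → Bool) := by simpa using hα.le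
  obtain ⟨S, hS⟩ := Cardinal.le_mk_iff_exists_set.1 hc
  refine ⟨branchUltrafilter '' S, ?_, ?_, ?_⟩
  · rintro _ ⟨x, -, rfl⟩
    exact branchUltrafilter_le_cofinite x
  · rw [Cardinal.mk_image_eq branchUltrafilter_injective, hS]
  · rintro _ ⟨x, hx, rfl⟩ h
    refine not_compl_range_mem_branchUltrafilter x
      ((h (Set.range (branchCode x))ᶜ).2 ?_ _ (Set.mem_image_of_mem _ hx))
    rintro _ ⟨⟨y, -, rfl⟩, hne⟩
    exact compl_range_mem_branchUltrafilter fun hxy => hne (by simp [hxy])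
end

section
/- Let W = {𝔘_k}_{k=1}^n, where n ∈ ℕ ∪ {∞} and n ≥ 2, be a finite or countably infinite minimal collection of free ultrafilters on ℕ, and let 𝔉 = ⋂ W. Then: (1) there exists a partition of ℕ into pairwise disjoint sets (N_k)_{k=1}^n with ⋃_k N_k = ℕ and N_k ∈ 𝔘_k for all k; (2) a set A ⊆ ℕ belongs to 𝔉 if and only if there exist sets (A_k)_{k=1}^n with A_k ∈ 𝔘_k, A_k ⊆ N_k for each k, and A = ⋃_k A_k. -/
/-!
Minimality gives, for each `U ∈ W`, a set `B U ∈ U` lying in no other member of `W`: the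
complement of a set that witnesses `⋂ W ≠ ⋂ (W \ {U})`. Enumerating the countable `W` by an
injection `f` into ℕ, the sets `D U = B U \ ⋃ {B V : f V < f U}` are disjoint, and `D U ∈ U`
since only finitely many sets outside `U` are removed. Adding the points covered by no `D U` to one
chosen piece yields the partition `N`. The description of `⋂ W` follows with `As U = A ∩ N U`.
-/

/-- Let `W` be a finite or countably infinite minimal collection (with at least two
elements) of free ultrafilters on ℕ and `𝔉 = ⋂ W`. Then (1) there is a partition of ℕ
into disjoint sets `N U`, `U ∈ W`, with `N U ∈ U`; and (2) a set `A` belongs to `𝔉`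
iff it is the union of sets `As U ∈ U` with `As U ⊆ N U`. -/
theorem stmt_16 (W : Set (Ultrafilter ℕ)) (hcount : W.Countable) (hnt : W.Nontrivial)
    (hfree : ∀ U ∈ W, (U : Filter ℕ) ≤ Filter.cofinite)
    (hmin : ∀ U ∈ W, ¬ ∀ A : Set ℕ,
      ((∀ V ∈ W, A ∈ V) ↔ (∀ V ∈ W \ {U}, A ∈ V))) :
    ∃ N : Ultrafilter ℕ → Set ℕ,
      (⋃ U ∈ W, N U) = Set.univ ∧
      W.PairwiseDisjoint N ∧
      (∀ U ∈ W, N U ∈ U) ∧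
      ∀ A : Set ℕ, (∀ U ∈ W, A ∈ U) ↔
        ∃ As : Ultrafilter ℕ → Set ℕ,
          (∀ U ∈ W, As U ∈ U ∧ As U ⊆ N U) ∧ A = ⋃ U ∈ W, As U := by
  classical
  have hB : ∀ U ∈ W, ∃ B : Set ℕ, B ∈ U ∧ ∀ V ∈ W, V ≠ U → B ∉ V := by
    intro U hU
    obtain ⟨A, hA⟩ := not_forall.mp (hmin U hU)
    have hA1 : ∀ V ∈ W \ {U}, A ∈ V := by
      by_contra h
      exact hA ⟨fun h' => (h fun V hV => h' V hV.1).elim, fun h' => (h h').elim⟩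
    have hA2 : A ∉ U := by
      intro h
      refine hA ⟨fun _ => hA1, fun _ V hV => ?_⟩
      by_cases hVU : V = U
      · exact hVU ▸ h
      · exact hA1 V ⟨hV, hVU⟩
    exact ⟨Aᶜ, Ultrafilter.compl_mem_iff_notMem.mpr hA2, fun V hV hVU h =>
      Ultrafilter.compl_mem_iff_notMem.mp h (hA1 V ⟨hV, hVU⟩)⟩
  choose! B hBU hBV using hB
  obtain ⟨f, hf⟩ := Set.countable_iff_exists_injOn.mp hcount
  obtain ⟨U₀, hU₀⟩ := hnt.nonempty
  let D : Ultrafilter ℕ → Set ℕ := fun U => B U \ ⋃ V ∈ {V ∈ W | f V < f U}, B V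
  have hD : ∀ U ∈ W, D U ∈ U := by
    intro U hU
    have hfin : {V ∈ W | f V < f U}.Finite := by
      refine Set.Finite.of_finite_image ((Set.finite_Iio (f U)).subset ?_)
        (hf.mono fun V hV => hV.1)
      rintro _ ⟨V, hV, rfl⟩
      exact hV.2
    refine Filter.inter_mem (hBU U hU) ?_
    change (⋃ V ∈ {V ∈ W | f V < f U}, B V)ᶜ ∈ U
    rw [Ultrafilter.compl_mem_iff_notMem, Ultrafilter.finite_biUnion_mem_iff hfin]
    rintro ⟨V, ⟨hV, hlt⟩, hmem⟩
    exact hBV V hV U hU (fun h => by subst h; exact lt_irrefl _ hlt) hmem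
  have hDlt : ∀ U ∈ W, ∀ V, f U < f V → ∀ x, x ∈ D U → x ∉ D V := by
    intro U hU V hlt x hxU hxV
    exact hxV.2 (Set.mem_biUnion (show U ∈ {V' ∈ W | f V' < f V} from ⟨hU, hlt⟩) hxU.1)
  have hDdis : ∀ U ∈ W, ∀ V ∈ W, ∀ x, x ∈ D U → x ∈ D V → U = V := by
    intro U hU V hV x hxU hxV
    rcases lt_trichotomy (f U) (f V) with h | h | h
    · exact (hDlt U hU V h x hxU hxV).elim
    · exact hf hU hV h
    · exact (hDlt V hV U h x hxV hxU).elim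
  let N : Ultrafilter ℕ → Set ℕ := fun U => D U ∪ {x | U = U₀ ∧ ∀ V ∈ W, x ∉ D V}
  have hcov : (⋃ U ∈ W, N U) = Set.univ := by
    refine Set.eq_univ_of_forall fun x => ?_
    by_cases h : ∃ V ∈ W, x ∈ D V
    · obtain ⟨V, hV, hx⟩ := h
      exact Set.mem_biUnion hV (Or.inl hx)
    · push Not at h
      exact Set.mem_biUnion hU₀ (Or.inr ⟨rfl, h⟩)
  have hN : ∀ U ∈ W, N U ∈ U := fun U hU =>
    Filter.mem_of_superset (hD U hU) Set.subset_union_left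
  refine ⟨N, hcov, ?_, hN, fun A => ⟨fun hA => ?_, ?_⟩⟩
  · intro U hU V hV hne
    refine Set.disjoint_left.mpr ?_
    rintro x (hx | ⟨rfl, hx⟩) (hy | ⟨hy, hy'⟩)
    · exact hne (hDdis U hU V hV x hx hy)
    · exact hy' U hU hx
    · exact hx V hV hy
    · exact hne hy.symm
  · refine ⟨fun U => A ∩ N U, fun U hU =>
      ⟨Filter.inter_mem (hA U hU) (hN U hU), Set.inter_subset_right⟩, ?_⟩
    rw [← Set.inter_iUnion₂, hcov, Set.inter_univ]
  · rintro ⟨As, hAs, rfl⟩ U hU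
    exact Filter.mem_of_superset (hAs U hU).1 (Set.subset_biUnion_of_mem hU)
end

section
/- Let W = {𝔘_k}_{k=1}^∞ be a countably infinite minimal collection of free ultrafilters on ℕ and let 𝔉 = ⋂_{k=1}^∞ 𝔘_k. Then there exists a free ultrafilter 𝔘_0 on ℕ such that 𝔉 ⊆ 𝔘_0 and 𝔘_0 ∉ W (𝔘_0 ≠ 𝔘_k for all k ≥ 1); in particular, 𝔉 = ⋂_{k=0}^∞ 𝔘_k, so the representation of 𝔉 as a countable intersection of ultrafilters is not unique. -/
/-!
The ultrafilter `U₀` is the limit of the sequence `U` along a free ultrafilter `𝒱` on the index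
set: `A ∈ U₀` iff `A ∈ U k` for `𝒱`-almost every `k`. Every set lying in all the `U k` lies in `U₀`,
so `U₀` is free and contains `𝔉`. Minimality gives, for each `k`, a set lying in every `U j` with
`j ≠ k` but not in `U k`; as `𝒱` is free, this set lies in `U₀`, hence `U₀ ≠ U k`.
-/

/-- If `W = {U k}` is a countably infinite minimal collection of free ultrafilters with
`𝔉 = ⋂ₖ U k`, then there is a free ultrafilter `U₀ ∉ W` with `𝔉 ⊆ U₀`; in particular,
`𝔉 = U₀ ∩ ⋂ₖ U k`, so the representation of `𝔉` as a countable intersection of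
ultrafilters is not unique. -/
theorem stmt_17 (U : ℕ → Ultrafilter ℕ) (hinj : Function.Injective U)
    (hfree : ∀ k, (U k : Filter ℕ) ≤ Filter.cofinite)
    (hmin : ∀ k, ¬ ∀ A : Set ℕ,
      ((∀ j, A ∈ U j) ↔ (∀ j, j ≠ k → A ∈ U j))) :
    ∃ U₀ : Ultrafilter ℕ, (U₀ : Filter ℕ) ≤ Filter.cofinite ∧
      (∀ A : Set ℕ, (∀ k, A ∈ U k) → A ∈ U₀) ∧
      (∀ k, U₀ ≠ U k) ∧
      ∀ A : Set ℕ, (∀ k, A ∈ U k) ↔ (A ∈ U₀ ∧ ∀ k, A ∈ U k) := by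
  have hmem : ∀ A : Set ℕ, A ∈ (Filter.hyperfilter ℕ).bind U ↔
      {k | A ∈ U k} ∈ Filter.hyperfilter ℕ := fun A => Iff.rfl
  have hsub : ∀ A : Set ℕ, (∀ k, A ∈ U k) → A ∈ (Filter.hyperfilter ℕ).bind U := fun A hA =>
    (hmem A).2 (Filter.univ_mem' hA)
  refine ⟨(Filter.hyperfilter ℕ).bind U, fun A hA => hsub A fun k => hfree k hA, hsub, ?_,
    fun A => ⟨fun h => ⟨hsub A h, h⟩, And.right⟩⟩
  intro k hk
  refine hmin k fun A => ⟨fun h j _ => h j, fun h j => ?_⟩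
  by_cases hj : j = k
  · have hA : A ∈ (Filter.hyperfilter ℕ).bind U := by
      refine (hmem A).2 (Filter.hyperfilter_le_cofinite ?_)
      refine Filter.mem_of_superset (Set.finite_singleton k).compl_mem_cofinite ?_
      exact fun i hi => h i hi
    rw [hj, ← hk]
    exact hA
  · exact h j hj
end

section
/- Let 𝔉 be a free filter and 𝔘 a free ultrafilter on ℕ, and suppose there exists A ∈ 𝔘 such that the trace 𝔉|_A = {A ∩ B : B ∈ 𝔉} equals the trace 𝔘|_A = {A ∩ B : B ∈ 𝔘}. Then 𝔘 is inavoidable for 𝔉: every collection W of free ultrafilters with ⋂ W = 𝔉 contains 𝔘 as an element. -/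
/-!
Some `V ∈ W` must contain `A`, and on `A` such a `V` is at least as fine as `F`, whose trace there
is that of `U`. Hence `V` refines `U`, and maximality of ultrafilters gives `V = U`.
-/

/-- If `F` is a free filter and `U` a free ultrafilter on ℕ such that the trace of `F`
on some `A ∈ U` equals the trace of `U` on `A`, then `U` is inavoidable for `F`: every
representation of `F` as an intersection of a collection of free ultrafilters contains
`U`. -/
theorem stmt_18 (F : Filter ℕ) (hne : F.NeBot) (hfree : F ≤ Filter.cofinite)
    (U : Ultrafilter ℕ) (hU : (U : Filter ℕ) ≤ Filter.cofinite)
    (A : Set ℕ) (hA : A ∈ U)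
    (htrace : ∀ S : Set ℕ,
      (∃ B ∈ F, S = A ∩ B) ↔ (∃ B ∈ U, S = A ∩ B)) :
    ∀ W : Set (Ultrafilter ℕ),
      (∀ V ∈ W, (V : Filter ℕ) ≤ Filter.cofinite) →
      (∀ C : Set ℕ, C ∈ F ↔ ∀ V ∈ W, C ∈ V) →
      U ∈ W := by
  intro W _ hW
  -- If every member of `W` omitted `A`, then `Aᶜ ∈ F`, so `∅` would lie in the trace of `U`.
  obtain ⟨V, hVW, hAV⟩ : ∃ V ∈ W, A ∈ V := by
    by_contra! h
    have hAc : Aᶜ ∈ F := (hW _).2 fun V hV => Ultrafilter.compl_mem_iff_notMem.2 (h V hV)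
    obtain ⟨B, hB, hAB⟩ := (htrace ∅).1 ⟨Aᶜ, hAc, by simp⟩
    have hmem : A ∩ B ∈ U := Filter.inter_mem hA hB
    rw [← hAB] at hmem
    exact U.empty_notMem hmem
  -- A member of `W` containing `A` contains the trace of `F` on `A`, hence refines `U`.
  have hle : (V : Filter ℕ) ≤ U := by
    intro B hB
    obtain ⟨B', hB', hBB'⟩ := (htrace (A ∩ B)).2 ⟨B, hB, rfl⟩
    have hmem : A ∩ B' ∈ V := Filter.inter_mem hAV ((hW B').1 hB' V hVW)
    rw [← hBB'] at hmem
    exact Filter.mem_of_superset hmem Set.inter_subset_right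
  rwa [← Ultrafilter.coe_le_coe.1 hle]
end

section
/- Let W be a minimal collection of free ultrafilters on ℕ and 𝔉 = ⋂ W. Then (a) every 𝔘 ∈ W is inavoidable for 𝔉: every collection W' of free ultrafilters with ⋂ W' = 𝔉 satisfies 𝔘 ∈ W'; consequently, (b) if W' is any minimal collection of free ultrafilters with ⋂ W' = 𝔉, then W' = W, i.e. the minimal representation of 𝔉 is unique. -/
/-! Minimality gives, for each `U ∈ W`, a set `A` that lies in every other member of `W` but not
in `U`. Then `A ∉ ⋂ W`, so any representation `W'` of `⋂ W` has a member `V` with `A ∉ V`. For every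
`B ∈ U` the union `A ∪ B` belongs to `⋂ W`, hence to `V`, which forces `B ∈ V`. Thus `U ⊆ V`, and
`U = V ∈ W'` because both are ultrafilters. Uniqueness of the minimal representation is this fact
(`mem_of_minimal`) applied in both directions. -/

/-- A member `U` of `W` whose removal changes `⋂ W` belongs to every collection of ultrafilters
with the same intersection as `W`. -/
theorem mem_of_minimal {α : Type*} {W W' : Set (Ultrafilter α)} {U : Ultrafilter α}
    (hU : U ∈ W)
    (hmin : ¬ ∀ A : Set α, ((∀ V ∈ W, A ∈ V) ↔ (∀ V ∈ W \ {U}, A ∈ V)))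
    (h : ∀ A : Set α, (∀ V ∈ W, A ∈ V) ↔ (∀ V ∈ W', A ∈ V)) : U ∈ W' := by
  obtain ⟨A, hA⟩ := not_forall.1 hmin
  have hA₁ : ∀ V ∈ W \ {U}, A ∈ V := by
    by_contra hn
    exact hA ⟨fun h₁ V hV => h₁ V hV.1, fun h₂ => absurd h₂ hn⟩
  have hA₂ : ¬ ∀ V ∈ W, A ∈ V := fun h₁ => hA ⟨fun _ => hA₁, fun _ => h₁⟩
  rw [h A] at hA₂
  push Not at hA₂
  obtain ⟨V, hV, hAV⟩ := hA₂
  have hle : (V : Filter α) ≤ U := by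
    intro B hB
    have hAB : ∀ X ∈ W, A ∪ B ∈ X := by
      intro X hX
      by_cases hXU : X = U
      · subst hXU
        exact Ultrafilter.union_mem_iff.2 (Or.inr hB)
      · exact Ultrafilter.union_mem_iff.2 (Or.inl (hA₁ X ⟨hX, hXU⟩))
    exact (Ultrafilter.union_mem_iff.1 ((h _).1 hAB V hV)).resolve_left hAV
  rwa [← Ultrafilter.coe_le_coe.1 hle]

/-- (a) Every member of a minimal collection `W` of free ultrafilters is inavoidable for
`𝔉 = ⋂ W`: any collection of free ultrafilters whose intersection is `𝔉` contains it.
(b) Consequently, any minimal collection of free ultrafilters whose intersection is `𝔉`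
equals `W`: the minimal representation is unique. -/
theorem stmt_19 (W : Set (Ultrafilter ℕ))
    (hfree : ∀ U ∈ W, (U : Filter ℕ) ≤ Filter.cofinite)
    (hnt : W.Nontrivial)
    (hmin : ∀ U ∈ W, ¬ ∀ A : Set ℕ,
      ((∀ V ∈ W, A ∈ V) ↔ (∀ V ∈ W \ {U}, A ∈ V))) :
    (∀ U ∈ W, ∀ W' : Set (Ultrafilter ℕ),
      (∀ V ∈ W', (V : Filter ℕ) ≤ Filter.cofinite) →
      (∀ A : Set ℕ, (∀ V ∈ W, A ∈ V) ↔ (∀ V ∈ W', A ∈ V)) →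
      U ∈ W') ∧
    ∀ W' : Set (Ultrafilter ℕ),
      (∀ V ∈ W', (V : Filter ℕ) ≤ Filter.cofinite) →
      W'.Nontrivial →
      (∀ U ∈ W', ¬ ∀ A : Set ℕ,
        ((∀ V ∈ W', A ∈ V) ↔ (∀ V ∈ W' \ {U}, A ∈ V))) →
      (∀ A : Set ℕ, (∀ V ∈ W, A ∈ V) ↔ (∀ V ∈ W', A ∈ V)) →
      W' = W := by
  refine ⟨fun U hU W' _ h => mem_of_minimal hU (hmin U hU) h, fun W' _ _ hmin' h => ?_⟩
  exact Set.Subset.antisymm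
    (fun U hU => mem_of_minimal hU (hmin' U hU) fun A => (h A).symm)
    (fun U hU => mem_of_minimal hU (hmin U hU) h)
end
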